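/- arXiv:2408.12684 — 8 statements merged into one kernel-verified Lean document; each statement's English description precedes it below -/
import Mathlib

section
/- Braid relation for the cluster R-operator: for all complex numbers z1,...,z6 such that every denominator arising in the evaluation of both compositions is nonzero (in particular z1, z3, z4, z6, 1+z1+z4, 1+z3+z6, 1+z1−z4z6 and 1−z1z3+z6 are nonzero), one has S1 S2 S1 (z1,z2,z3,z4,z5,z6) = S2 S1 S2 (z1,z2,z3,z4,z5,z6). -/
/-!
Write `a = 1 + z1 + z4`, `b = 1 + z3 + z6`, `c = 1 + z1 - z4 z6`, `f = 1 - z1 z3 + z6`.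
Both compositions are computed one factor at a time. The successive denominators `1 + w1 + w4`
at which `S` is evaluated factor, as `a`, `-c / z4`, `z4 f / a` for `S₁ S₂ S₁` and as
`b`, `-f / z3`, `z3 c / b` for `S₂ S₁ S₂`, so everything cancels down to the common value
`(z1 z3 z5 z6 / f, f / (z1 z3), z4 f / c, z3 c / f, c / (z4 z6), z1 z2 z4 z6 / c)`.
-/

noncomputable section

abbrev C4 := ℂ × ℂ × ℂ × ℂ
abbrev C6 := ℂ × ℂ × ℂ × ℂ × ℂ × ℂ

/-- The birational map `S` on 4-tuples of complex numbers. -/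
def Sop : C4 → C4
  | (z1, z2, z3, z4) =>
    (-(z1 * z3 * z4) / (1 + z1 + z4), -(1 + z1 + z4) / z1,
     -(1 + z1 + z4) / z4, -(z1 * z2 * z4) / (1 + z1 + z4))

/-- The involution `T` on 4-tuples of complex numbers. -/
def Tmap : C4 → C4
  | (z1, z2, z3, z4) => (z3, z4, z1, z2)

/-- `S₁` acting on 6-tuples: `S` on coordinates 1–4, identity on 5,6. -/
def S1op : C6 → C6
  | (z1, z2, z3, z4, z5, z6) =>
    match Sop (z1, z2, z3, z4) with
    | (w1, w2, w3, w4) => (w1, w2, w3, w4, z5, z6)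

/-- `S₂` acting on 6-tuples: `S` on coordinates 3–6, identity on 1,2. -/
def S2op : C6 → C6
  | (z1, z2, z3, z4, z5, z6) =>
    match Sop (z3, z4, z5, z6) with
    | (w3, w4, w5, w6) => (z1, z2, w3, w4, w5, w6)

/-- `T₁` acting on 6-tuples: `T` on coordinates 1–4, identity on 5,6. -/
def T1op : C6 → C6
  | (z1, z2, z3, z4, z5, z6) => (z3, z4, z1, z2, z5, z6)

/-- `T₂` acting on 6-tuples: `T` on coordinates 3–6, identity on 1,2. -/
def T2op : C6 → C6
  | (z1, z2, z3, z4, z5, z6) => (z1, z2, z5, z6, z3, z4)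

/-- Evaluation of `S` once a simplified form `d` of its denominator is known. -/
theorem Sop_eq {w1 w2 w3 w4 d : ℂ} (hd : 1 + w1 + w4 = d) :
    Sop (w1, w2, w3, w4) =
      (-(w1 * w3 * w4) / d, -d / w1, -d / w4, -(w1 * w2 * w4) / d) := by
  simp only [Sop, hd]

/-- Braid relation for the cluster R-operator:
`S₁ S₂ S₁ = S₂ S₁ S₂` on 6-tuples, under nonvanishing of all denominators arising. -/
theorem braid_relation_S (z1 z2 z3 z4 z5 z6 : ℂ)
    (hz1 : z1 ≠ 0) (hz3 : z3 ≠ 0) (hz4 : z4 ≠ 0) (hz6 : z6 ≠ 0)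
    (h14 : 1 + z1 + z4 ≠ 0) (h36 : 1 + z3 + z6 ≠ 0)
    (h146 : 1 + z1 - z4 * z6 ≠ 0) (h136 : 1 - z1 * z3 + z6 ≠ 0) :
    S1op (S2op (S1op (z1, z2, z3, z4, z5, z6))) =
      S2op (S1op (S2op (z1, z2, z3, z4, z5, z6))) := by
  -- The middle and last evaluations on each side, with the factored denominators.
  have hA2 : Sop (-(1 + z1 + z4) / z4, -(z1 * z2 * z4) / (1 + z1 + z4), z5, z6) =
      (-((1 + z1 + z4) * z5 * z6) / (1 + z1 - z4 * z6),
        -(1 + z1 - z4 * z6) / (1 + z1 + z4),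
        (1 + z1 - z4 * z6) / (z4 * z6), z1 * z2 * z4 * z6 / (1 + z1 - z4 * z6)) := by
    rw [Sop_eq (d := -(1 + z1 - z4 * z6) / z4) (by field_simp; ring)]
    simp only [Prod.mk.injEq]
    refine ⟨?_, ?_, ?_, ?_⟩ <;> field_simp
  have hA3 : Sop (-(z1 * z3 * z4) / (1 + z1 + z4), -(1 + z1 + z4) / z1,
        -((1 + z1 + z4) * z5 * z6) / (1 + z1 - z4 * z6),
        -(1 + z1 - z4 * z6) / (1 + z1 + z4)) =
      (z1 * z3 * z5 * z6 / (1 - z1 * z3 + z6), (1 - z1 * z3 + z6) / (z1 * z3),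
        z4 * (1 - z1 * z3 + z6) / (1 + z1 - z4 * z6),
        z3 * (1 + z1 - z4 * z6) / (1 - z1 * z3 + z6)) := by
    rw [Sop_eq (d := z4 * (1 - z1 * z3 + z6) / (1 + z1 + z4)) (by field_simp; ring)]
    simp only [Prod.mk.injEq]
    refine ⟨?_, ?_, ?_, ?_⟩ <;> field_simp
  have hB2 : Sop (z1, z2, -(z3 * z5 * z6) / (1 + z3 + z6), -(1 + z3 + z6) / z3) =
      (z1 * z3 * z5 * z6 / (1 - z1 * z3 + z6), (1 - z1 * z3 + z6) / (z1 * z3),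
        -(1 - z1 * z3 + z6) / (1 + z3 + z6),
        -(z1 * z2 * (1 + z3 + z6)) / (1 - z1 * z3 + z6)) := by
    rw [Sop_eq (d := -(1 - z1 * z3 + z6) / z3) (by field_simp; ring)]
    simp only [Prod.mk.injEq]
    refine ⟨?_, ?_, ?_, ?_⟩ <;> field_simp
  have hB3 : Sop (-(1 - z1 * z3 + z6) / (1 + z3 + z6),
        -(z1 * z2 * (1 + z3 + z6)) / (1 - z1 * z3 + z6),
        -(1 + z3 + z6) / z6, -(z3 * z4 * z6) / (1 + z3 + z6)) =
      (z4 * (1 - z1 * z3 + z6) / (1 + z1 - z4 * z6),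
        z3 * (1 + z1 - z4 * z6) / (1 - z1 * z3 + z6),
        (1 + z1 - z4 * z6) / (z4 * z6), z1 * z2 * z4 * z6 / (1 + z1 - z4 * z6)) := by
    rw [Sop_eq (d := z3 * (1 + z1 - z4 * z6) / (1 + z3 + z6)) (by field_simp; ring)]
    simp only [Prod.mk.injEq]
    refine ⟨?_, ?_, ?_, ?_⟩ <;> field_simp
  simp only [S1op, S2op, Sop_eq rfl (w1 := z1) (w2 := z2) (w3 := z3) (w4 := z4),
    Sop_eq rfl (w1 := z3) (w2 := z4) (w3 := z5) (w4 := z6), hA2, hA3, hB2, hB3]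
end
end

section
/- Closed form of the triple composition: for all complex numbers z1,...,z6 such that every denominator arising is nonzero, S1 S2 S1 (z1,z2,z3,z4,z5,z6) = ( z1 z3 z5 z6/(1 − z1 z3 + z6), (1 − z1 z3 + z6)/(z1 z3), z4 (1 − z1 z3 + z6)/(1 + z1 − z4 z6), z3 (1 + z1 − z4 z6)/(1 − z1 z3 + z6), (1 + z1 − z4 z6)/(z4 z6), z1 z2 z4 z6/(1 + z1 − z4 z6) ). -/
/-!
The composition is a direct computation with rational functions. Put `D = 1 + z1 + z4`,
`Q = 1 + z1 - z4 * z6` and `P = 1 - z1 * z3 + z6`. The three successive denominators of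
`S₁`, `S₂`, `S₁` are `D`, `-Q / z4` and `z4 * P / D`, so all of them are nonzero under the
hypotheses, and `D` cancels from every coordinate of the result.
-/

noncomputable section

/-- Closed form of the triple composition `S₁ S₂ S₁`. -/
theorem S1S2S1_closed_form (z1 z2 z3 z4 z5 z6 : ℂ)
    (hz1 : z1 ≠ 0) (hz3 : z3 ≠ 0) (hz4 : z4 ≠ 0) (hz6 : z6 ≠ 0)
    (h14 : 1 + z1 + z4 ≠ 0)
    (h146 : 1 + z1 - z4 * z6 ≠ 0) (h136 : 1 - z1 * z3 + z6 ≠ 0) :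
    S1op (S2op (S1op (z1, z2, z3, z4, z5, z6))) =
      (z1 * z3 * z5 * z6 / (1 - z1 * z3 + z6),
       (1 - z1 * z3 + z6) / (z1 * z3),
       z4 * (1 - z1 * z3 + z6) / (1 + z1 - z4 * z6),
       z3 * (1 + z1 - z4 * z6) / (1 - z1 * z3 + z6),
       (1 + z1 - z4 * z6) / (z4 * z6),
       z1 * z2 * z4 * z6 / (1 + z1 - z4 * z6)) := by
  -- The denominators met by the second and the third operator, in terms of the original variables.
  have hE : 1 + -(1 + z1 + z4) / z4 + z6 = -(1 + z1 - z4 * z6) / z4 := by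
    field_simp
    ring
  have hF : 1 + -(z1 * z3 * z4) / (1 + z1 + z4) + -(1 + z1 - z4 * z6) / (1 + z1 + z4)
      = z4 * (1 - z1 * z3 + z6) / (1 + z1 + z4) := by
    field_simp
    ring
  have hw : -(-(1 + z1 - z4 * z6) / z4) / (-(1 + z1 + z4) / z4)
      = -(1 + z1 - z4 * z6) / (1 + z1 + z4) := by
    field_simp
  simp only [S1op, S2op, Sop, hE, hw, hF, Prod.mk.injEq]
  -- Naming the three denominators keeps `field_simp` from expanding them.
  generalize 1 + z1 + z4 = D at *
  generalize 1 + z1 - z4 * z6 = Q at *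
  generalize 1 - z1 * z3 + z6 = P at *
  refine ⟨?_, ?_, ?_, ?_, ?_, ?_⟩ <;> field_simp
end
end

section
/- First forbidden relation, sufficiency: for complex numbers z1,...,z6 such that every denominator arising in the evaluation of both compositions is nonzero, if z1 = −1 or z4 = −1 or z6 = −1, then T1 S2 S1 (z1,z2,z3,z4,z5,z6) = S2 S1 T2 (z1,z2,z3,z4,z5,z6). -/
/-!
Put `A = 1 + z1 + z4`, `B = 1 + z1 + z6` and `C = 1 + z1 - z4 * z6`. Evaluating both sides, the last
two coordinates agree identically, and each of the first four agrees as soon as `A * B = z1 * C`.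
The theorem therefore comes from the factorization
`A * B - z1 * C = (1 + z1) * (1 + z4) * (1 + z6)`, whose right side vanishes precisely when one of
`z1`, `z4`, `z6` is `-1`.
-/

noncomputable section

/-- First forbidden relation, sufficiency: if `z1 = -1` or `z4 = -1` or `z6 = -1`
then `T₁ S₂ S₁ (z) = S₂ S₁ T₂ (z)`. -/
theorem forbidden_one_sufficiency (z1 z2 z3 z4 z5 z6 : ℂ)
    (hz1 : z1 ≠ 0) (hz4 : z4 ≠ 0) (hz6 : z6 ≠ 0)
    (h14 : 1 + z1 + z4 ≠ 0) (h16 : 1 + z1 + z6 ≠ 0) (h146 : 1 + z1 - z4 * z6 ≠ 0)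
    (h : z1 = -1 ∨ z4 = -1 ∨ z6 = -1) :
    T1op (S2op (S1op (z1, z2, z3, z4, z5, z6))) =
      S2op (S1op (T2op (z1, z2, z3, z4, z5, z6))) := by
  have key : (1 + z1 + z4) * (1 + z1 + z6) = z1 * (1 + z1 - z4 * z6) := by
    have h0 : (1 + z1) * (1 + z4) * (1 + z6) = 0 := by
      rcases h with rfl | rfl | rfl <;> ring
    linear_combination h0
  -- The denominators of the second application of `S` on either side: both are multiples of `C`.
  have hD : 1 + -(1 + z1 + z4) / z4 + z6 = -(1 + z1 - z4 * z6) / z4 := by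
    field_simp
    ring
  have hE : 1 + -(1 + z1 + z6) / z6 + z4 = -(1 + z1 - z4 * z6) / z6 := by
    field_simp
    ring
  simp only [T1op, T2op, S1op, S2op, Sop, Prod.mk.injEq, hD, hE]
  -- Opaque names keep `field_simp` from expanding the sums before `key` is used.
  generalize 1 + z1 + z4 = A at *
  generalize 1 + z1 + z6 = B at *
  generalize 1 + z1 - z4 * z6 = C at *
  refine ⟨?_, ?_, ?_, ?_, ?_, ?_⟩
  · field_simp
    linear_combination -z5 * key
  · field_simp
    linear_combination key
  · field_simp
    linear_combination z3 * key
  · field_simp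
    linear_combination -key
  · field_simp
  · field_simp
end
end

section
/- First forbidden relation, necessity: for complex numbers z1,...,z6 such that every denominator arising in the evaluation of both compositions is nonzero, if z1 ≠ −1, z4 ≠ −1 and z6 ≠ −1, then T1 S2 S1 (z1,z2,z3,z4,z5,z6) ≠ S2 S1 T2 (z1,z2,z3,z4,z5,z6). -/
/-! The second coordinates already differ. That of `T₁ S₂ S₁ z` is
`-(1 + z1 - z4 * z6) / (1 + z1 + z4)` and that of `S₂ S₁ T₂ z` is `-(1 + z1 + z6) / z1`.
After clearing denominators, their equality reads
`(1 + z1 + z4) * (1 + z1 + z6) - z1 * (1 + z1 - z4 * z6) = 0`, whose left-hand side factors as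
`(1 + z1) * (1 + z4) * (1 + z6)`. -/

noncomputable section

/-- First forbidden relation, necessity: if `z1 ≠ -1`, `z4 ≠ -1` and `z6 ≠ -1`
then `T₁ S₂ S₁ (z) ≠ S₂ S₁ T₂ (z)`. -/
theorem forbidden_one_necessity (z1 z2 z3 z4 z5 z6 : ℂ)
    (hz1 : z1 ≠ 0) (hz4 : z4 ≠ 0) (hz6 : z6 ≠ 0)
    (h14 : 1 + z1 + z4 ≠ 0) (h16 : 1 + z1 + z6 ≠ 0) (h146 : 1 + z1 - z4 * z6 ≠ 0)
    (h1 : z1 ≠ -1) (h4 : z4 ≠ -1) (h6 : z6 ≠ -1) :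
    T1op (S2op (S1op (z1, z2, z3, z4, z5, z6))) ≠
      S2op (S1op (T2op (z1, z2, z3, z4, z5, z6))) := by
  intro h
  have h2 := congrArg (fun w : C6 => w.2.1) h
  simp only [S1op, S2op, T1op, T2op, Sop] at h2
  have e : 1 + -(1 + z1 + z4) / z4 + z6 = -(1 + z1 - z4 * z6) / z4 := by
    field_simp
    ring
  rw [e] at h2
  field_simp at h2
  have key : (1 + z1) * (1 + z4) * (1 + z6) = 0 := by linear_combination h2
  simp only [mul_eq_zero] at key
  rcases key with (k | k) | k
  · exact h1 (by linear_combination k)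
  · exact h4 (by linear_combination k)
  · exact h6 (by linear_combination k)
end
end

section
/- Second forbidden relation, sufficiency: for complex numbers z1,...,z6 such that every denominator arising in the evaluation of both compositions is nonzero, if z1 = −1 or z3 = −1 or z6 = −1, then T2 S1 S2 (z1,z2,z3,z4,z5,z6) = S1 S2 T1 (z1,z2,z3,z4,z5,z6). -/
/-!
Write `D = 1 + z₃ + z₆`, `D' = 1 + z₁ + z₆` and `F = 1 - z₁ z₃ + z₆`. The pivot of the outer `S₁`
is `-F / z₃` on the left and `-F / z₁` on the right. The first two coordinates of the two sides
agree identically, and each of the other four agrees as soon as `D D' = z₆ F`. Since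
`D D' - z₆ F = (1 + z₁) (1 + z₃) (1 + z₆)`, this holds when `z₁`, `z₃` or `z₆` is `-1`.
-/

noncomputable section

/-- Second forbidden relation, sufficiency: if `z1 = -1` or `z3 = -1` or `z6 = -1`
then `T₂ S₁ S₂ (z) = S₁ S₂ T₁ (z)`. -/
theorem forbidden_two_sufficiency (z1 z2 z3 z4 z5 z6 : ℂ)
    (hz1 : z1 ≠ 0) (hz3 : z3 ≠ 0) (hz6 : z6 ≠ 0)
    (h36 : 1 + z3 + z6 ≠ 0) (h16 : 1 + z1 + z6 ≠ 0) (h136 : 1 - z1 * z3 + z6 ≠ 0)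
    (h : z1 = -1 ∨ z3 = -1 ∨ z6 = -1) :
    T2op (S1op (S2op (z1, z2, z3, z4, z5, z6))) =
      S1op (S2op (T1op (z1, z2, z3, z4, z5, z6))) := by
  have hz : (1 + z1) * (1 + z3) * (1 + z6) = 0 := by
    rcases h with rfl | rfl | rfl <;> ring
  have key : (1 + z3 + z6) * (1 + z1 + z6) = z6 * (1 - z1 * z3 + z6) := by
    linear_combination hz
  -- The pivot `1 + z₁ + z₄` of the outer `S₁`, on the left and on the right.
  have hL : 1 + z1 + -(1 + z3 + z6) / z3 = -(1 - z1 * z3 + z6) / z3 := by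
    field_simp; ring
  have hR : 1 + z3 + -(1 + z1 + z6) / z1 = -(1 - z1 * z3 + z6) / z1 := by
    field_simp; ring
  simp only [T2op, S1op, S2op, T1op, Sop, Prod.mk.injEq, hL, hR]
  -- Names for the trinomials, so that `field_simp` treats each as a nonzero atom.
  generalize 1 + z3 + z6 = D at *
  generalize 1 + z1 + z6 = D' at *
  generalize 1 - z1 * z3 + z6 = F at *
  refine ⟨?_, ?_, ?_, ?_, ?_, ?_⟩
  · field_simp
  · field_simp
  · field_simp
    linear_combination -key
  · field_simp
    linear_combination z4 * key
  · field_simp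
    linear_combination key
  · field_simp
    linear_combination -z2 * key
end
end

section
/- Second forbidden relation, necessity: for complex numbers z1,...,z6 such that every denominator arising in the evaluation of both compositions is nonzero, if z1 ≠ −1, z3 ≠ −1 and z6 ≠ −1, then T2 S1 S2 (z1,z2,z3,z4,z5,z6) ≠ S1 S2 T1 (z1,z2,z3,z4,z5,z6). -/
/-! Only the third coordinates need to be compared. With `a = 1 + z3 + z6`, `b = 1 + z1 + z6` and
`c = 1 - z1 * z3 + z6`, they are `-a / z6` on the left and `-c / b` on the right. Equality would
force `a * b = c * z6`, but `a * b - c * z6 = (1 + z1) * (1 + z3) * (1 + z6)`, and none of these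
three factors vanishes. -/

noncomputable section

/-- Second forbidden relation, necessity: if `z1 ≠ -1`, `z3 ≠ -1` and `z6 ≠ -1`
then `T₂ S₁ S₂ (z) ≠ S₁ S₂ T₁ (z)`. -/
theorem forbidden_two_necessity (z1 z2 z3 z4 z5 z6 : ℂ)
    (hz1 : z1 ≠ 0) (hz3 : z3 ≠ 0) (hz6 : z6 ≠ 0)
    (h36 : 1 + z3 + z6 ≠ 0) (h16 : 1 + z1 + z6 ≠ 0) (h136 : 1 - z1 * z3 + z6 ≠ 0)
    (h1 : z1 ≠ -1) (h3 : z3 ≠ -1) (h6 : z6 ≠ -1) :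
    T2op (S1op (S2op (z1, z2, z3, z4, z5, z6))) ≠
      S1op (S2op (T1op (z1, z2, z3, z4, z5, z6))) := by
  intro h
  have third : -(1 + z3 + z6) / z6 = -(1 + z3 + -(1 + z1 + z6) / z1) / (-(1 + z1 + z6) / z1) :=
    congrArg (fun p : C6 => p.2.2.1) h
  have key : -(1 + z3 + -(1 + z1 + z6) / z1) / (-(1 + z1 + z6) / z1) =
      -(1 - z1 * z3 + z6) / (1 + z1 + z6) := by
    have hb : -(1 + z1 + z6) / z1 ≠ 0 := div_ne_zero (neg_ne_zero.mpr h16) hz1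
    rw [div_eq_div_iff hb h16]
    field_simp
    ring
  rw [key, div_eq_div_iff hz6 h16] at third
  have prod : (z1 + 1) * (z3 + 1) * (z6 + 1) = 0 := by linear_combination -third
  have ne {z : ℂ} (hz : z ≠ -1) : z + 1 ≠ 0 := fun e => hz (eq_neg_of_add_eq_zero_left e)
  exact mul_ne_zero (mul_ne_zero (ne h1) (ne h3)) (ne h6) prod
end
end

section
/- Braid relation for the flat operators: for all complex numbers t1, t2, t3 such that every denominator arising in the evaluation of both compositions is nonzero, one has R1 R2 R1 (t1,t2,t3) = R2 R1 R2 (t1,t2,t3); both sides equal ( t1 t2 t3/(1 + t3 − t1 t2 t3), (1 + t3 − t1 t2 t3)/(−1 + t2 t3 + t1 t2 t3), −1 + t2 t3 + t1 t2 t3 ). -/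
/-!
Both compositions equal the closed form. The point is that the denominators collapse: write
`A = 1 + t2 + t1 t2`, `B = 1 + t3 + t2 t3`, `E = 1 + t3 - t1 t2 t3` and
`F = -1 + t2 t3 + t1 t2 t3`. The successive denominators are `A`, `-F`, `-E / F` along `R₁ R₂ R₁`
and `B`, `E / B`, `-F` along `R₂ R₁ R₂`, so the assumed nonvanishing of `A, B, E, F` covers every
division.
-/

noncomputable section

abbrev C2 := ℂ × ℂ
abbrev C3 := ℂ × ℂ × ℂ

/-- The map `R` on pairs of complex numbers. -/
def Rop : C2 → C2
  | (t1, t2) => (-(t1 * t2) / (1 + t2 + t1 * t2), -(1 + t2 + t1 * t2))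

/-- `R₁` acting on triples: `R` on coordinates 1,2, identity on 3. -/
def R1op : C3 → C3
  | (t1, t2, t3) =>
    (-(t1 * t2) / (1 + t2 + t1 * t2), -(1 + t2 + t1 * t2), t3)

/-- `R₂` acting on triples: `R` on coordinates 2,3, identity on 1. -/
def R2op : C3 → C3
  | (t1, t2, t3) =>
    (t1, -(t2 * t3) / (1 + t3 + t2 * t3), -(1 + t3 + t2 * t3))

/-- `V₁` acting on triples: swaps coordinates 1 and 2. -/
def V1op : C3 → C3
  | (t1, t2, t3) => (t2, t1, t3)

/-- `V₂` acting on triples: swaps coordinates 2 and 3. -/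
def V2op : C3 → C3
  | (t1, t2, t3) => (t1, t3, t2)

theorem R121_closed_form (t1 t2 t3 : ℂ) (h12 : 1 + t2 + t1 * t2 ≠ 0)
    (ha : 1 + t3 - t1 * t2 * t3 ≠ 0) (hb : -1 + t2 * t3 + t1 * t2 * t3 ≠ 0) :
    R1op (R2op (R1op (t1, t2, t3))) =
      (t1 * t2 * t3 / (1 + t3 - t1 * t2 * t3),
       (1 + t3 - t1 * t2 * t3) / (-1 + t2 * t3 + t1 * t2 * t3),
       -1 + t2 * t3 + t1 * t2 * t3) := by
  have hD : 1 + t3 + -(1 + t2 + t1 * t2) * t3 = -(-1 + t2 * t3 + t1 * t2 * t3) := by ring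
  have hN : -(t1 * t2) / (1 + t2 + t1 * t2) *
      (-(-(1 + t2 + t1 * t2) * t3) / -(-1 + t2 * t3 + t1 * t2 * t3)) =
      t1 * t2 * t3 / (-1 + t2 * t3 + t1 * t2 * t3) := by
    field_simp
  have hE : 1 + -(-(1 + t2 + t1 * t2) * t3) / -(-1 + t2 * t3 + t1 * t2 * t3) +
      t1 * t2 * t3 / (-1 + t2 * t3 + t1 * t2 * t3) =
      -((1 + t3 - t1 * t2 * t3) / (-1 + t2 * t3 + t1 * t2 * t3)) := by
    rw [neg_div_neg_eq, add_assoc, ← add_div, ← neg_div, eq_div_iff hb, add_mul,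
      div_mul_cancel₀ _ hb]
    ring
  simp only [R1op, R2op, hD, hN, hE, Prod.mk.injEq, neg_neg, and_true]
  field_simp

theorem R212_closed_form (t1 t2 t3 : ℂ) (h23 : 1 + t3 + t2 * t3 ≠ 0)
    (ha : 1 + t3 - t1 * t2 * t3 ≠ 0) :
    R2op (R1op (R2op (t1, t2, t3))) =
      (t1 * t2 * t3 / (1 + t3 - t1 * t2 * t3),
       (1 + t3 - t1 * t2 * t3) / (-1 + t2 * t3 + t1 * t2 * t3),
       -1 + t2 * t3 + t1 * t2 * t3) := by
  have hE : 1 + -(t2 * t3) / (1 + t3 + t2 * t3) + t1 * (-(t2 * t3) / (1 + t3 + t2 * t3)) =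
      (1 + t3 - t1 * t2 * t3) / (1 + t3 + t2 * t3) := by
    field_simp
    ring
  have hN : -((1 + t3 - t1 * t2 * t3) / (1 + t3 + t2 * t3)) * -(1 + t3 + t2 * t3) =
      1 + t3 - t1 * t2 * t3 := by
    rw [neg_mul_neg, div_mul_cancel₀ _ h23]
  have hD : 1 + -(1 + t3 + t2 * t3) + (1 + t3 - t1 * t2 * t3) =
      -(-1 + t2 * t3 + t1 * t2 * t3) := by ring
  simp only [R1op, R2op, hE, hN, hD, Prod.mk.injEq, neg_neg, neg_div_neg_eq, and_true]
  field_simp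

/-- Braid relation for the flat operators: `R₁ R₂ R₁ = R₂ R₁ R₂`, both sides
given by an explicit closed form. -/
theorem R_braid_relation (t1 t2 t3 : ℂ)
    (h12 : 1 + t2 + t1 * t2 ≠ 0) (h23 : 1 + t3 + t2 * t3 ≠ 0)
    (ha : 1 + t3 - t1 * t2 * t3 ≠ 0) (hb : -1 + t2 * t3 + t1 * t2 * t3 ≠ 0) :
    R1op (R2op (R1op (t1, t2, t3))) = R2op (R1op (R2op (t1, t2, t3))) ∧
    R1op (R2op (R1op (t1, t2, t3))) =
      (t1 * t2 * t3 / (1 + t3 - t1 * t2 * t3),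
       (1 + t3 - t1 * t2 * t3) / (-1 + t2 * t3 + t1 * t2 * t3),
       -1 + t2 * t3 + t1 * t2 * t3) := by
  rw [R121_closed_form t1 t2 t3 h12 ha hb, R212_closed_form t1 t2 t3 h23 ha]
  exact ⟨rfl, rfl⟩
end
end

section
/- The map S preserves tuples of the form (z1, 1/z1, z3, 1/z3): for all nonzero complex numbers z1, z3 with 1+z3+z1 z3 ≠ 0, one has S(z1, 1/z1, z3, 1/z3) = (ζ1, 1/ζ1, ζ3, 1/ζ3), where ζ1 = −z1 z3/(1+z3+z1 z3) and ζ3 = −(1+z3+z1 z3); moreover, S restricted to such tuples is an involution: S(S(z1, 1/z1, z3, 1/z3)) = (z1, 1/z1, z3, 1/z3) (under the nonvanishing of all denominators arising). -/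
/-! On tuples `(z1, 1/z1, z3, 1/z3)` the denominator `1 + z1 + 1/z3` of `S` equals `D / z3` with
`D = 1 + z3 + z1 z3`, so `S` acts by `(z1, z3) ↦ (ζ1, ζ3) = (-z1 z3 / D, -D)`. Since
`ζ1 ζ3 = z1 z3`, the new value of `D` is `1 - D + z1 z3 = -z3`, which is nonzero. The formula
therefore applies a second time, and `(-ζ1 ζ3 / (-z3), z3) = (z1, z3)`. -/

noncomputable section

/-- The birational map `S⁻¹` on 4-tuples of complex numbers. -/
def SinvOp : C4 → C4
  | (z1, z2, z3, z4) =>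
    (-z3 / (z2 + z3 + z2 * z3), -(z2 + z3 + z2 * z3) * z4,
     -z1 * (z2 + z3 + z2 * z3), -z2 / (z2 + z3 + z2 * z3))

theorem Sop_reciprocal (z1 z3 : ℂ) (hz1 : z1 ≠ 0) (hz3 : z3 ≠ 0) (h : 1 + z3 + z1 * z3 ≠ 0) :
    Sop (z1, 1 / z1, z3, 1 / z3) =
      (-(z1 * z3) / (1 + z3 + z1 * z3), 1 / (-(z1 * z3) / (1 + z3 + z1 * z3)),
       -(1 + z3 + z1 * z3), 1 / -(1 + z3 + z1 * z3)) := by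
  have hd : 1 + z1 + 1 / z3 = (1 + z3 + z1 * z3) / z3 := by
    field_simp
    ring
  simp only [Sop, hd]
  -- Treating `D` as an atom lets `field_simp` cancel it using `h`.
  generalize 1 + z3 + z1 * z3 = D at h
  refine Prod.ext ?_ (Prod.ext ?_ (Prod.ext ?_ ?_)) <;> simp only <;> field_simp

/-- `S` preserves tuples of the form `(z1, 1/z1, z3, 1/z3)`, with
`ζ1 = -z1 z3/(1+z3+z1 z3)`, `ζ3 = -(1+z3+z1 z3)`, and is an involution
on such tuples. -/
theorem S_preserves_reciprocal_tuples (z1 z3 : ℂ)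
    (hz1 : z1 ≠ 0) (hz3 : z3 ≠ 0) (h : 1 + z3 + z1 * z3 ≠ 0) :
    Sop (z1, 1 / z1, z3, 1 / z3) =
      (-(z1 * z3) / (1 + z3 + z1 * z3), 1 / (-(z1 * z3) / (1 + z3 + z1 * z3)),
       -(1 + z3 + z1 * z3), 1 / -(1 + z3 + z1 * z3)) ∧
    Sop (Sop (z1, 1 / z1, z3, 1 / z3)) = (z1, 1 / z1, z3, 1 / z3) := by
  have key := Sop_reciprocal z1 z3 hz1 hz3 h
  refine ⟨key, ?_⟩
  -- The image has `ζ1 ζ3 = z1 z3`, so its own `D` is `-z3`.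
  have hmul : -(z1 * z3) / (1 + z3 + z1 * z3) * -(1 + z3 + z1 * z3) = z1 * z3 := by
    rw [mul_neg, div_mul_cancel₀ _ h, neg_neg]
  have hD : 1 + -(1 + z3 + z1 * z3) +
      -(z1 * z3) / (1 + z3 + z1 * z3) * -(1 + z3 + z1 * z3) = -z3 := by
    rw [hmul]
    ring
  have h1 : -(z1 * z3) / -z3 = z1 := by
    field_simp
  rw [key, Sop_reciprocal _ _ (div_ne_zero (neg_ne_zero.2 (mul_ne_zero hz1 hz3)) h)
    (neg_ne_zero.2 h) (by rw [hD]; exact neg_ne_zero.2 hz3), hD, hmul, h1, neg_neg]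
end
end
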